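/- Let q be an odd prime power, let g ≥ 1 be an integer, let n be an odd positive integer, and let χ_2 be the quadratic character of F_{q^n}. Then Σ_{(f1,f2,f3) ∈ F̂_g} Σ_{x ∈ F_{q^n}} [ χ_2((f1·f3)(x)) + χ_2((f2·f3)(x)) + χ_2((f1·f2)(x)) ] = 0, where polynomials are evaluated at x via the inclusion F_q ⊆ F_{q^n}. -/

import Mathlib

open Polynomial Classical

noncomputable section

/-- Quadratic character of a field `K`: 1 on nonzero squares, -1 on nonsquares, 0 at 0. -/
def quadCharFn (K : Type*) [Field K] (a : K) : ℤ :=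
  if a = 0 then 0 else if IsSquare a then 1 else -1

/-- Quadratic residue symbol modulo `P`: 1 if `F` is a nonzero square mod `P`,
-1 if a nonsquare, 0 if `P ∣ F`. -/
def chiP {Fq : Type*} [Field Fq] (P F : Fq[X]) : ℤ :=
  if P ∣ F then 0 else if ∃ G, P ∣ (F - G ^ 2) then 1 else -1

/-- The genus function `L(d1,d2,d3)`. -/
def Lg (d1 d2 d3 : ℕ) : ℕ :=
  if Even (d1 + d3) ∧ Even (d2 + d3) then d1 + d2 + d3 else d1 + d2 + d3 + 1

/-- The parameter set `F̂_g` of triples of square-free pairwise coprime polynomials,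
`f3` monic, satisfying the genus condition and avoiding the degenerate degrees. -/
def FhatSet (Fq : Type*) [Field Fq] (g : ℕ) : Set (Fq[X] × Fq[X] × Fq[X]) :=
  {t | Squarefree t.1 ∧ Squarefree t.2.1 ∧ Squarefree t.2.2 ∧
       IsCoprime t.1 t.2.1 ∧ IsCoprime t.1 t.2.2 ∧ IsCoprime t.2.1 t.2.2 ∧
       t.2.2.Monic ∧
       Lg t.1.natDegree t.2.1.natDegree t.2.2.natDegree = g + 3 ∧
       ({t.1.natDegree, t.2.1.natDegree, t.2.2.natDegree} : Multiset ℕ) ≠ {g + 3, 0, 0} ∧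
       ({t.1.natDegree, t.2.1.natDegree, t.2.2.natDegree} : Multiset ℕ) ≠ {g + 2, 0, 0}}

/-- The parameter set `F_g`: triples in `F̂_g` with all three polynomials monic. -/
def FSet (Fq : Type*) [Field Fq] (g : ℕ) : Set (Fq[X] × Fq[X] × Fq[X]) :=
  {t | t ∈ FhatSet Fq g ∧ t.1.Monic ∧ t.2.1.Monic}

end

/-!
Multiplying `f₁` or `f₂` by a unit of `F_q` permutes `F̂_g`. Take the unit `u` to be a nonsquare of
`F_q`; it remains a nonsquare in `F_{q^n}`, because its norm is `u ^ n` with `n` odd. Scaling `f₁`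
by `u` negates `χ₂((f₁f₃)(x))` and `χ₂((f₁f₂)(x))`, and scaling `f₂` by `u` negates
`χ₂((f₂f₃)(x))`, so each of the three sums over `F̂_g` equals its own negative.
-/

theorem finsum_mem_eq_zero_of_comp_perm_eq_neg {α M : Type*} [AddCommGroup M]
    [IsAddTorsionFree M] {s : Set α} (hs : s.Finite) {f : α → M} (e : Equiv.Perm α)
    (hes : ∀ a, e a ∈ s ↔ a ∈ s) (hf : ∀ a ∈ s, f (e a) = -f a) :
    ∑ᶠ a ∈ s, f a = 0 := by
  have bijOn : Set.BijOn e s s := e.bijOn hes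
  refine self_eq_neg.mp ?_
  calc ∑ᶠ a ∈ s, f a
      = ∑ᶠ a ∈ s, -f a := (finsum_mem_eq_of_bijOn e bijOn fun a ha ↦ (hf a ha).symm).symm
    _ = -∑ᶠ a ∈ s, f a := finsum_mem_neg_distrib f hs

section Squares

theorem isSquare_of_isSquare_pow_of_odd {G₀ : Type*} [CommGroupWithZero G₀] {a : G₀} {n : ℕ}
    (hn : Odd n) (h : IsSquare (a ^ n)) : IsSquare a := by
  obtain rfl | ha := eq_or_ne a 0
  · exact IsSquare.zero
  obtain ⟨m, rfl⟩ := hn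
  have quotient_eq : a ^ (2 * m + 1) / a ^ (2 * m) = a := by
    rw [pow_succ', mul_div_cancel_right₀ _ (pow_ne_zero _ ha)]
  exact quotient_eq ▸ h.div ((even_two_mul m).isSquare_pow a)

theorem isSquare_algebraMap_iff_of_odd_finrank {F L : Type*} [Field F] [Field L] [Algebra F L]
    (hodd : Odd (Module.finrank F L)) {a : F} : IsSquare (algebraMap F L a) ↔ IsSquare a := by
  refine ⟨fun h ↦ isSquare_of_isSquare_pow_of_odd hodd ?_, fun h ↦ h.map (algebraMap F L)⟩
  simpa only [Algebra.norm_algebraMap] using h.map (Algebra.norm F)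

end Squares

section FiniteFieldExtension

variable {F L : Type*} [Field F] [Field L] [Algebra F L]

theorem finrank_eq_of_card_eq_card_pow [Fintype F] [Fintype L] {n : ℕ}
    (h : Fintype.card L = Fintype.card F ^ n) :
    Module.finrank F L = n :=
  Nat.pow_right_injective Fintype.one_lt_card (Module.card_eq_pow_finrank.symm.trans h)

theorem exists_units_not_isSquare_algebraMap [Finite F] (hF : ringChar F ≠ 2)
    (hodd : Odd (Module.finrank F L)) : ∃ u : Fˣ, ¬IsSquare (algebraMap F L u) := by
  obtain ⟨c, hc⟩ := FiniteField.exists_nonsquare hF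
  have hc0 : c ≠ 0 := fun h ↦ hc (h ▸ IsSquare.zero)
  exact ⟨Units.mk0 c hc0, (isSquare_algebraMap_iff_of_odd_finrank hodd).not.mpr hc⟩

end FiniteFieldExtension

section QuadraticCharacter

variable {K : Type*} [Field K]

theorem quadCharFn_eq_quadraticChar [Fintype K] (a : K) : quadCharFn K a = quadraticChar K a := by
  simp only [quadCharFn, quadraticChar_apply, quadraticCharFun]
  congr

theorem quadCharFn_mul_of_not_isSquare [Finite K] {c : K} (hc : ¬IsSquare c) (a : K) :
    quadCharFn K (c * a) = -quadCharFn K a := by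
  have := Fintype.ofFinite K
  simp only [quadCharFn_eq_quadraticChar, map_mul, quadraticChar_neg_one_iff_not_isSquare.mpr hc,
    neg_one_mul]

variable [Fintype K] {F : Type*} [Field F] [Algebra F K]

variable (K) in
/-- The complete quadratic character sum `∑ χ₂(f(x))` over the points `x` of the finite field `K`,
for a polynomial `f` with coefficients in a subfield `F`. -/
noncomputable def quadCharSum (f : F[X]) : ℤ :=
  ∑ x : K, quadCharFn K (aeval x f)

theorem quadCharSum_units_smul {u : Fˣ} (hu : ¬IsSquare (algebraMap F K u)) (f : F[X]) :
    quadCharSum K (u • f) = -quadCharSum K f := by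
  have aeval_smul (x : K) : aeval x (u • f) = algebraMap F K u * aeval x f := by
    rw [Units.smul_def, map_smul, Algebra.smul_def]
  simp only [quadCharSum, aeval_smul, quadCharFn_mul_of_not_isSquare hu, Finset.sum_neg_distrib]

end QuadraticCharacter

section Polynomials

theorem finite_setOf_natDegree_le {R : Type*} [Semiring R] [Finite R] (d : ℕ) :
    {p : R[X] | p.natDegree ≤ d}.Finite := by
  have : Finite (degreeLT R (d + 1)) := .of_equiv _ (degreeLTEquiv R (d + 1)).symm.toEquiv
  refine (Set.toFinite (degreeLT R (d + 1) : Set R[X])).subset fun p hp ↦ ?_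
  exact mem_degreeLT.mpr ((degree_le_of_natDegree_le hp).trans_lt (mod_cast d.lt_succ_self))

theorem squarefree_group_smul_iff {G M : Type*} [Group G] [CommMonoid M] [MulAction G M]
    [SMulCommClass G M M] [IsScalarTower G M M] (a : G) (x : M) :
    Squarefree (a • x) ↔ Squarefree x := by
  have isUnit_smul_one : IsUnit (a • (1 : M)) := (isUnit_smul_iff a 1).mpr isUnit_one
  have associated : Associated (a • x) x := by
    simpa only [smul_one_mul] using associated_unit_mul_left x _ isUnit_smul_one
  exact associated.squarefree_iff

theorem natDegree_group_smul {G R : Type*} [Group G] [Semiring R] [DistribMulAction G R]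
    (a : G) (p : R[X]) : (a • p).natDegree = p.natDegree :=
  natDegree_smul_of_smul_regular p (isSMulRegular_of_group a)

end Polynomials

section Triples

variable {F : Type*} [Field F] {g : ℕ}

theorem add_add_le_Lg (d₁ d₂ d₃ : ℕ) : d₁ + d₂ + d₃ ≤ Lg d₁ d₂ d₃ := by
  unfold Lg
  split_ifs <;> omega

theorem finite_FhatSet [Finite F] : (FhatSet F g).Finite := by
  have bounded : {p : F[X] | p.natDegree ≤ g + 3}.Finite := finite_setOf_natDegree_le (g + 3)
  refine (bounded.prod (bounded.prod bounded)).subset ?_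
  rintro ⟨f₁, f₂, f₃⟩ ⟨-, -, -, -, -, -, -, hL, -, -⟩
  have sum_le : f₁.natDegree + f₂.natDegree + f₃.natDegree ≤ g + 3 := hL ▸ add_add_le_Lg _ _ _
  simp only [Set.mem_prod, Set.mem_ofPred_eq]
  omega

/-- The permutation `(f₁, f₂, f₃) ↦ (a f₁, b f₂, f₃)` of triples of polynomials. The third
polynomial is left alone because `FhatSet` requires it to be monic. -/
noncomputable def scaleTriple (a b : Fˣ) : Equiv.Perm (F[X] × F[X] × F[X]) :=
  (MulAction.toPerm a).prodCongr ((MulAction.toPerm b).prodCongr (Equiv.refl F[X]))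

theorem scaleTriple_apply (a b : Fˣ) (t : F[X] × F[X] × F[X]) :
    scaleTriple a b t = (a • t.1, b • t.2.1, t.2.2) :=
  rfl

theorem scaleTriple_mem_FhatSet_iff (a b : Fˣ) (t : F[X] × F[X] × F[X]) :
    scaleTriple a b t ∈ FhatSet F g ↔ t ∈ FhatSet F g := by
  simp only [FhatSet, scaleTriple_apply, Set.mem_ofPred_eq, squarefree_group_smul_iff,
    natDegree_group_smul, isCoprime_group_smul_left, isCoprime_group_smul_right]

theorem finsum_FhatSet_quadCharSum_eq_zero [Finite F] {K : Type*} [Field K] [Fintype K]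
    [Algebra F K] {u : Fˣ} (hu : ¬IsSquare (algebraMap F K u)) (a b : Fˣ)
    {P : F[X] × F[X] × F[X] → F[X]} (hP : ∀ t, P (scaleTriple a b t) = u • P t) :
    ∑ᶠ t ∈ FhatSet F g, quadCharSum K (P t) = 0 :=
  finsum_mem_eq_zero_of_comp_perm_eq_neg finite_FhatSet (scaleTriple a b)
    (scaleTriple_mem_FhatSet_iff a b) fun t _ ↦ by rw [hP, quadCharSum_units_smul hu]

end Triples

/-- for odd `n`, the double sum over `F̂_g` and `x ∈ F_{q^n}` of
`χ₂((f1f3)(x)) + χ₂((f2f3)(x)) + χ₂((f1f2)(x))` vanishes. -/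
theorem stmt15 (q : ℕ) (hq_odd : Odd q) (hq_pp : IsPrimePow q)
    (g : ℕ) (hg : 1 ≤ g)
    (n : ℕ) (hn_pos : 0 < n) (hn_odd : Odd n)
    (Fq : Type) [Field Fq] [Fintype Fq] (hFq : Fintype.card Fq = q)
    (K : Type) [Field K] [Fintype K] [Algebra Fq K] (hK : Fintype.card K = q ^ n) :
    (∑ᶠ t ∈ FhatSet Fq g, ∑ x : K,
        (quadCharFn K (aeval x (t.1 * t.2.2)) + quadCharFn K (aeval x (t.2.1 * t.2.2)) +
          quadCharFn K (aeval x (t.1 * t.2.1)))) = 0 := by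
  subst hFq
  have char_ne_two : ringChar Fq ≠ 2 := fun h ↦
    Nat.not_even_iff_odd.mpr hq_odd (Nat.even_iff.mpr (FiniteField.even_card_of_char_two h))
  have odd_finrank : Odd (Module.finrank Fq K) := by rwa [finrank_eq_of_card_eq_card_pow hK]
  obtain ⟨u, hu⟩ := exists_units_not_isSquare_algebraMap char_ne_two odd_finrank
  have sum₁₃ : ∑ᶠ t ∈ FhatSet Fq g, quadCharSum K (t.1 * t.2.2) = 0 :=
    finsum_FhatSet_quadCharSum_eq_zero hu u 1 fun t ↦ by simp [scaleTriple_apply, smul_mul_assoc]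
  have sum₂₃ : ∑ᶠ t ∈ FhatSet Fq g, quadCharSum K (t.2.1 * t.2.2) = 0 :=
    finsum_FhatSet_quadCharSum_eq_zero hu 1 u fun t ↦ by simp [scaleTriple_apply, smul_mul_assoc]
  have sum₁₂ : ∑ᶠ t ∈ FhatSet Fq g, quadCharSum K (t.1 * t.2.1) = 0 :=
    finsum_FhatSet_quadCharSum_eq_zero hu u 1 fun t ↦ by simp [scaleTriple_apply, smul_mul_assoc]
  calc _ = ∑ᶠ t ∈ FhatSet Fq g, (quadCharSum K (t.1 * t.2.2) + quadCharSum K (t.2.1 * t.2.2) +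
        quadCharSum K (t.1 * t.2.1)) := by simp only [Finset.sum_add_distrib, quadCharSum]
    _ = 0 := by
      rw [finsum_mem_add_distrib finite_FhatSet, finsum_mem_add_distrib finite_FhatSet,
        sum₁₃, sum₂₃, sum₁₂, add_zero, add_zero]
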